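/- Let n ≥ 2 and let Λ be an n-dimensional isotropic subspace of ℂ^{2n+1}. Then the function g_Λ is bisubmodular: for any two admissible subsets S₁, S₂ ⊆ [n] ∪ [n]̄ one has g_Λ(S₁) + g_Λ(S₂) ≥ g_Λ(S₁ ∩ S₂) + g_Λ(S₁ ⊔ S₂), where S₁ ⊔ S₂ := {a ∈ S₁ ∪ S₂ : ā ∉ S₁ ∪ S₂}. -/

import Mathlib

/-!
Write `d(S) = dim (Λ ∩ H_S)`, `U = S₁ ∪ S₂`, `J = S₁ ⊔ S₂`, and let `c` be the number of `q` with both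
`q` and `q̄` in `U`. Counting barred elements (`card_barred`) turns the claim into
`d(S₁) + d(S₂) + c ≤ d(S₁ ∩ S₂) + d(J)`. The dimension formula applied to `Λ ∩ H_{S₁}` and `Λ ∩ H_{S₂}`
gives `d(S₁) + d(S₂) ≤ d(S₁ ∩ S₂) + d(U)` (`finrank_submod`), so it is enough to show
`d(U) + c ≤ d(J)` (`finrank_union_add_card_le`).

For this, let `E` be the span of the basis vectors `e_{s̄}`, `s ∈ J`, so that `Eᗮ = H_J`, and let `G ⊇ E`
be the span of `E` and of the `c` vectors `e_q` with `q, q̄ ∈ U`.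

* `(Λ ∩ H_U) + G` is isotropic, hence of dimension at most `n`, and `(Λ ∩ H_U) ∩ G ⊆ Λ ∩ E`.
  Therefore `d(U) + |J| + c ≤ n + dim (Λ ∩ E)`.
* `Λ + Eᗮ ⊆ (Λ ∩ E)ᗮ` since `Λ` is isotropic. Therefore `n + dim (Λ ∩ E) ≤ d(J) + |J|`.
-/

open scoped BigOperators

/-- Index set for the coordinates of `ℂ^{2n+1}`: `none` is the coordinate `0`,
`some (q, false)` is the coordinate `q+1 ∈ [n]`, and `some (q, true)` is the barred
coordinate `(q+1)̄ ∈ [n]̄`. -/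
abbrev Idx (n : ℕ) := Option (Fin n × Bool)

/-- The nondegenerate symmetric bilinear form
`y·z = 2 y₀ z₀ + Σ_q (y_q z_{q̄} + y_{q̄} z_q)` on `ℂ^{2n+1}`. -/
noncomputable def bform (n : ℕ) (y z : Idx n → ℂ) : ℂ :=
  2 * y none * z none +
    ∑ q : Fin n, (y (some (q, false)) * z (some (q, true)) +
      y (some (q, true)) * z (some (q, false)))

/-- A subspace is isotropic if the bilinear form vanishes identically on it. -/
def IsIsotropic (n : ℕ) (Λ : Submodule ℂ (Idx n → ℂ)) : Prop :=
  ∀ y ∈ Λ, ∀ z ∈ Λ, bform n y z = 0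

/-- `H_S`: the coordinate subspace of vectors whose coordinates indexed by `S` vanish. -/
noncomputable def coordSub (n : ℕ) (S : Set (Idx n)) : Submodule ℂ (Idx n → ℂ) where
  carrier := {v | ∀ i ∈ S, v i = 0}
  add_mem' := by
    intro a b ha hb i hi
    simp only [Pi.add_apply, ha i hi, hb i hi, add_zero]
  zero_mem' := by intro i hi; rfl
  smul_mem' := by
    intro c a ha i hi
    simp only [Pi.smul_apply, ha i hi, smul_zero]

/-- `rk_Λ(S) = n − dim(Λ ∩ H_S)`. -/
noncomputable def rk (n : ℕ) (Λ : Submodule ℂ (Idx n → ℂ)) (S : Set (Idx n)) : ℕ :=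
  n - Module.finrank ℂ ↥(Λ ⊓ coordSub n S)

/-- The set of coordinates in `[n] ∪ [n]̄` corresponding to a finite set of pairs. -/
def finIdx (n : ℕ) (S : Finset (Fin n × Bool)) : Set (Idx n) :=
  (fun p => (some p : Idx n)) '' ↑S

/-- A subset `S ⊆ [n] ∪ [n]̄` is admissible if it contains no pair `{q, q̄}`. -/
def Admissible (n : ℕ) (S : Finset (Fin n × Bool)) : Prop :=
  ∀ q : Fin n, ¬((q, false) ∈ S ∧ (q, true) ∈ S)

/-- `rk_Λ(S)` for `S ⊆ [n] ∪ [n]̄`. -/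
noncomputable def rkF (n : ℕ) (Λ : Submodule ℂ (Idx n → ℂ)) (S : Finset (Fin n × Bool)) : ℕ :=
  rk n Λ (finIdx n S)

/-- `g_Λ(S) = rk_Λ(S) − |S ∩ [n]̄|`. -/
noncomputable def gF (n : ℕ) (Λ : Submodule ℂ (Idx n → ℂ)) (S : Finset (Fin n × Bool)) : ℤ :=
  (rkF n Λ S : ℤ) - ((S.filter fun p => p.2 = true).card : ℤ)

/-- The delta-matroid `𝒟(Λ)`: maximal admissible subsets of full rank. -/
def deltaMatroid (n : ℕ) (Λ : Submodule ℂ (Idx n → ℂ)) : Set (Finset (Fin n × Bool)) :=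
  {S | Admissible n S ∧ S.card = n ∧ rkF n Λ S = n}

/-- `x(S) = Σ_{q ∈ S ∩ [n]} x_q − Σ_{q̄ ∈ S ∩ [n]̄} x_q`. -/
def xval (n : ℕ) (x : Fin n → ℝ) (S : Finset (Fin n × Bool)) : ℝ :=
  ∑ p ∈ S.filter (fun p => p.2 = false), x p.1 -
    ∑ p ∈ S.filter (fun p => p.2 = true), x p.1

/-- The polytope `𝒫(Λ)` cut out by the inequalities `x(S) ≤ g_Λ(S)` over admissible `S`. -/
def polytopeP (n : ℕ) (Λ : Submodule ℂ (Idx n → ℂ)) : Set (Fin n → ℝ) :=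
  {x | ∀ S : Finset (Fin n × Bool), Admissible n S → xval n x S ≤ (gF n Λ S : ℝ)}

/-- `χ(S')`: the 0–1 vector whose `q`-th coordinate is `1` exactly when `q ∈ S' ∩ [n]`. -/
def chi (n : ℕ) (S : Finset (Fin n × Bool)) : Fin n → ℝ :=
  fun q => if (q, false) ∈ S then 1 else 0

/-- `S₁ ⊔ S₂ = {a ∈ S₁ ∪ S₂ : ā ∉ S₁ ∪ S₂}`. -/
def sqcup (n : ℕ) (S₁ S₂ : Finset (Fin n × Bool)) : Finset (Fin n × Bool) :=
  (S₁ ∪ S₂).filter (fun p => (p.1, !p.2) ∉ S₁ ∪ S₂)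

/-- The involution `q ↔ q̄` on `[n] ∪ [n]̄`. -/
def barP {n : ℕ} (p : Fin n × Bool) : Fin n × Bool := (p.1, !p.2)

lemma barP_barP {n : ℕ} (p : Fin n × Bool) : barP (barP p) = p := by
  simp [barP]

lemma barP_injective {n : ℕ} : Function.Injective (barP (n := n)) :=
  Function.LeftInverse.injective barP_barP

/-- The set `C` of unbarred `q` with both `q` and `q̄` in `U`. -/
def conflicts {n : ℕ} (U : Finset (Fin n × Bool)) : Finset (Fin n × Bool) :=
  U.filter fun p => p.2 = false ∧ barP p ∈ U

/-- The elements of `U` whose partner is not in `U`; for `U = S₁ ∪ S₂` this is `S₁ ⊔ S₂`. -/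
def reduced {n : ℕ} (U : Finset (Fin n × Bool)) : Finset (Fin n × Bool) :=
  U.filter fun p => barP p ∉ U

/-! ### The bilinear form -/

lemma bform_eq {n : ℕ} (y z : Idx n → ℂ) :
    bform n y z = 2 * y none * z none + ∑ p : Fin n × Bool, y (some p) * z (some (barP p)) := by
  simp [bform, barP, Fintype.sum_prod_type, add_comm]

/-- `bform` as a bundled bilinear form. -/
noncomputable def bilin (n : ℕ) : LinearMap.BilinForm ℂ (Idx n → ℂ) :=
  LinearMap.mk₂ ℂ (bform n)
    (by intro a b c; simp only [bform_eq, Pi.add_apply, add_mul, mul_add, Finset.sum_add_distrib]; ring)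
    (by intro k a b
        simp only [bform_eq, Pi.smul_apply, smul_eq_mul, mul_add, Finset.mul_sum, mul_assoc]
        ring_nf)
    (by intro a b c; simp only [bform_eq, Pi.add_apply, mul_add, Finset.sum_add_distrib]; ring)
    (by intro k a b
        simp only [bform_eq, Pi.smul_apply, smul_eq_mul, mul_add, Finset.mul_sum]
        congr 1
        · ring
        · exact Finset.sum_congr rfl fun _ _ => by ring)

lemma bilin_apply {n : ℕ} (y z : Idx n → ℂ) : bilin n y z = bform n y z := rfl

lemma bform_comm {n : ℕ} (y z : Idx n → ℂ) : bform n y z = bform n z y := by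
  unfold bform
  congr 1
  · ring
  · exact Finset.sum_congr rfl fun _ _ => by ring

lemma bform_single_some {n : ℕ} (p : Fin n × Bool) (z : Idx n → ℂ) :
    bform n (Pi.single (some p) 1) z = z (some (barP p)) := by
  rw [bform_eq]
  simp [Pi.single_apply]

lemma bform_single_none {n : ℕ} (z : Idx n → ℂ) :
    bform n (Pi.single none 1) z = 2 * z none := by
  rw [bform_eq]
  simp

lemma bilin_nondegenerate (n : ℕ) : (bilin n).Nondegenerate := by
  have key : ∀ z : Idx n → ℂ, (∀ y, bform n y z = 0) → z = 0 := by
    intro z hz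
    funext i
    rcases i with _ | p
    · simpa [bform_single_none] using hz (Pi.single none 1)
    · simpa [bform_single_some, barP_barP] using hz (Pi.single (some (barP p)) 1)
  exact ⟨fun z hz => key z fun y => by rw [bform_comm]; exact hz y, fun z hz => key z hz⟩

lemma finrank_perp {n : ℕ} (W : Submodule ℂ (Idx n → ℂ)) :
    Module.finrank ℂ W + Module.finrank ℂ ((bilin n).orthogonal W) = 2 * n + 1 := by
  have h := LinearMap.BilinForm.finrank_orthogonal (bilin_nondegenerate n) W
  have hW := Submodule.finrank_le W
  have hV : Module.finrank ℂ (Idx n → ℂ) = 2 * n + 1 := by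
    simp [mul_comm]
  omega

lemma finrank_le_of_isotropic {n : ℕ} {W : Submodule ℂ (Idx n → ℂ)} (hW : IsIsotropic n W) :
    Module.finrank ℂ W ≤ n := by
  have hle : W ≤ (bilin n).orthogonal W := fun z hz y hy => hW y hy z hz
  have h1 := Submodule.finrank_mono hle
  have h2 := finrank_perp W
  omega

/-! ### Coordinate subspaces -/

/-- The span of the standard basis vectors indexed by `T ⊆ [n] ∪ [n]̄`. -/
noncomputable def coordSpan (n : ℕ) (T : Finset (Fin n × Bool)) : Submodule ℂ (Idx n → ℂ) :=
  Submodule.span ℂ (Pi.basisFun ℂ (Idx n) '' finIdx n T)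

lemma mem_coordSpan {n : ℕ} {T : Finset (Fin n × Bool)} {v : Idx n → ℂ} :
    v ∈ coordSpan n T ↔ v none = 0 ∧ ∀ p, p ∉ T → v (some p) = 0 := by
  rw [coordSpan, Module.Basis.mem_span_image]
  constructor
  · intro h
    refine ⟨?_, fun p hp => ?_⟩
    · by_contra h0
      have := @h none (by simpa using h0)
      simp [finIdx] at this
    · by_contra h0
      have := @h (some p) (by simpa using h0)
      simp [finIdx] at this
      exact hp this
  · rintro ⟨h0, h⟩ i hi
    rcases i with _ | p
    · simp [h0] at hi
    · by_contra hp
      have hp' : p ∉ T := by simpa [finIdx] using hp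
      simp [h p hp'] at hi

lemma finrank_coordSpan {n : ℕ} (T : Finset (Fin n × Bool)) :
    Module.finrank ℂ (coordSpan n T) = T.card := by
  have hr : Pi.basisFun ℂ (Idx n) '' finIdx n T =
      Set.range fun p : T => Pi.basisFun ℂ (Idx n) (some p.1) := by
    ext v
    constructor
    · rintro ⟨_, ⟨p, hp, rfl⟩, rfl⟩
      exact ⟨⟨p, hp⟩, rfl⟩
    · rintro ⟨p, rfl⟩
      exact ⟨_, ⟨p.1, p.2, rfl⟩, rfl⟩
  rw [coordSpan, hr, finrank_span_eq_card]
  · simp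
  · exact (Pi.basisFun ℂ (Idx n)).linearIndependent.comp (fun p : T => (some p.1 : Idx n))
      fun a b h => Subtype.ext (Option.some_injective _ h)

lemma mem_coordSub {n : ℕ} {S : Finset (Fin n × Bool)} {v : Idx n → ℂ} :
    v ∈ coordSub n (finIdx n S) ↔ ∀ p ∈ S, v (some p) = 0 := by
  change (∀ i ∈ finIdx n S, v i = 0) ↔ _
  constructor
  · exact fun h p hp => h _ ⟨p, hp, rfl⟩
  · rintro h _ ⟨p, hp, rfl⟩
    exact h p hp

lemma bform_eq_zero_of_coordSpan {n : ℕ} {T : Finset (Fin n × Bool)} {y z : Idx n → ℂ}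
    (hy : y ∈ coordSpan n T) (hz : ∀ p ∈ T, z (some (barP p)) = 0) : bform n y z = 0 := by
  rw [mem_coordSpan] at hy
  rw [bform_eq, hy.1, Finset.sum_eq_zero]
  · simp
  · intro p _
    by_cases hp : p ∈ T
    · rw [hz p hp, mul_zero]
    · rw [hy.2 p hp, zero_mul]

lemma orthogonal_coordSpan {n : ℕ} (J : Finset (Fin n × Bool)) :
    (bilin n).orthogonal (coordSpan n (J.image barP)) = coordSub n (finIdx n J) := by
  ext z
  rw [LinearMap.BilinForm.mem_orthogonal_iff, mem_coordSub]
  constructor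
  · intro h p hp
    have := h (Pi.single (some (barP p)) 1) (by
      rw [mem_coordSpan]
      refine ⟨by simp, fun q hq => ?_⟩
      have : q ≠ barP p := by
        rintro rfl
        exact hq (Finset.mem_image_of_mem _ hp)
      simp [this])
    rwa [bilin_apply, bform_single_some, barP_barP] at this
  · intro h y hy
    refine bform_eq_zero_of_coordSpan hy fun p hp => ?_
    obtain ⟨q, hq, rfl⟩ := Finset.mem_image.1 hp
    rw [barP_barP]
    exact h q hq

/-! ### The dimension estimates -/

/-- `dim Λ + dim (Λ ∩ E) ≤ d(J) + |J|`, from `Λ + Eᗮ ⊆ (Λ ∩ E)ᗮ`. -/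
lemma finrank_add_inf_coordSpan_le {n : ℕ} {Λ : Submodule ℂ (Idx n → ℂ)} (hiso : IsIsotropic n Λ)
    (J : Finset (Fin n × Bool)) :
    Module.finrank ℂ Λ + Module.finrank ℂ ↥(Λ ⊓ coordSpan n (J.image barP)) ≤
      Module.finrank ℂ ↥(Λ ⊓ coordSub n (finIdx n J)) + J.card := by
  set E := coordSpan n (J.image barP) with hE
  have hdimE : Module.finrank ℂ E = J.card := by
    rw [hE, finrank_coordSpan, Finset.card_image_of_injective _ barP_injective]
  rw [← orthogonal_coordSpan, ← hE]
  have hle : Λ ⊔ (bilin n).orthogonal E ≤ (bilin n).orthogonal (Λ ⊓ E) :=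
    sup_le (fun z hz y hy => hiso y hy.1 z hz) (fun z hz y hy => hz y hy.2)
  have h1 := Submodule.finrank_mono hle
  have h2 := finrank_perp (Λ ⊓ E)
  have h3 := finrank_perp E
  have h4 := Submodule.finrank_sup_add_finrank_inf_eq Λ ((bilin n).orthogonal E)
  omega

lemma mem_reduced {n : ℕ} {U : Finset (Fin n × Bool)} {p : Fin n × Bool} :
    p ∈ reduced U ↔ p ∈ U ∧ barP p ∉ U := by
  simp [reduced]

lemma mem_conflicts {n : ℕ} {U : Finset (Fin n × Bool)} {p : Fin n × Bool} :
    p ∈ conflicts U ↔ p ∈ U ∧ p.2 = false ∧ barP p ∈ U := by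
  simp [conflicts]

lemma mem_image_barP {n : ℕ} {J : Finset (Fin n × Bool)} {p : Fin n × Bool} :
    p ∈ J.image barP ↔ barP p ∈ J := by
  rw [Finset.mem_image]
  constructor
  · rintro ⟨q, hq, rfl⟩
    rwa [barP_barP]
  · intro h
    exact ⟨_, h, barP_barP p⟩

/-- `d(U) + |J| + c ≤ n + dim (Λ ∩ E)`, where `J = reduced U`, by enlarging `Λ ∩ H_U` to an isotropic
subspace. -/
lemma finrank_union_add_card_add_le {n : ℕ} {Λ : Submodule ℂ (Idx n → ℂ)}
    (hiso : IsIsotropic n Λ) (U : Finset (Fin n × Bool)) :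
    Module.finrank ℂ ↥(Λ ⊓ coordSub n (finIdx n U)) + (reduced U).card + (conflicts U).card ≤
      n + Module.finrank ℂ ↥(Λ ⊓ coordSpan n ((reduced U).image barP)) := by
  set N := Λ ⊓ coordSub n (finIdx n U) with hN
  set T := (reduced U).image barP ∪ conflicts U with hT
  have memT : ∀ p, p ∈ T ↔ (barP p ∈ U ∧ p ∉ U) ∨ (p ∈ U ∧ p.2 = false ∧ barP p ∈ U) := by
    intro p
    rw [hT, Finset.mem_union, mem_image_barP, mem_reduced, mem_conflicts, barP_barP]
  have hcard : T.card = (reduced U).card + (conflicts U).card := by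
    rw [hT, Finset.card_union_of_disjoint, Finset.card_image_of_injective _ barP_injective]
    rw [Finset.disjoint_left]
    intro p hp hp'
    rw [mem_image_barP, mem_reduced, barP_barP] at hp
    exact hp.2 (mem_conflicts.1 hp').1
  have hNT : ∀ y ∈ coordSpan n T, ∀ z ∈ N, bform n y z = 0 := by
    intro y hy z hz
    refine bform_eq_zero_of_coordSpan hy fun p hp => mem_coordSub.1 hz.2 _ ?_
    rcases (memT p).1 hp with h | h
    · exact h.1
    · exact h.2.2
  have hTT : ∀ y ∈ coordSpan n T, ∀ z ∈ coordSpan n T, bform n y z = 0 := by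
    intro y hy z hz
    refine bform_eq_zero_of_coordSpan hy fun p hp => (mem_coordSpan.1 hz).2 _ fun hp' => ?_
    have h1 := (memT p).1 hp
    have h2 := (memT _).1 hp'
    rw [barP_barP] at h2
    have h3 : (barP p).2 = !p.2 := rfl
    rw [h3] at h2
    cases hb : p.2 <;> simp [hb] at h1 h2 <;> tauto
  have hX : IsIsotropic n (N ⊔ coordSpan n T) := by
    intro y hy z hz
    obtain ⟨a, ha, b, hb, rfl⟩ := Submodule.mem_sup.1 hy
    obtain ⟨a', ha', b', hb', rfl⟩ := Submodule.mem_sup.1 hz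
    rw [← bilin_apply]
    simp only [map_add, LinearMap.add_apply, bilin_apply]
    rw [hiso a ha.1 a' ha'.1, hNT b hb a' ha', hTT b hb b' hb', bform_comm a b', hNT b' hb' a ha]
    simp
  have hle : N ⊓ coordSpan n T ≤ Λ ⊓ coordSpan n ((reduced U).image barP) := by
    rintro v ⟨hvN, hvT⟩
    refine ⟨hvN.1, mem_coordSpan.2 ⟨(mem_coordSpan.1 hvT).1, fun p hp => ?_⟩⟩
    by_cases hpU : p ∈ U
    · exact mem_coordSub.1 hvN.2 p hpU
    · refine (mem_coordSpan.1 hvT).2 p fun hpT => ?_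
      rw [hT, Finset.mem_union] at hpT
      rcases hpT with h | h
      · exact hp h
      · exact hpU (mem_conflicts.1 h).1
  have h1 := finrank_le_of_isotropic hX
  have h2 := Submodule.finrank_sup_add_finrank_inf_eq N (coordSpan n T)
  have h3 := Submodule.finrank_mono hle
  rw [finrank_coordSpan] at h2
  omega

/-- `d(U) + c ≤ d(J)`: freeing the `c` pairs `{q, q̄} ⊆ U` raises the dimension by at least `c`. -/
lemma finrank_union_add_card_le {n : ℕ} {Λ : Submodule ℂ (Idx n → ℂ)}
    (hiso : IsIsotropic n Λ) (hΛ : Module.finrank ℂ ↥Λ = n) (U : Finset (Fin n × Bool)) :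
    Module.finrank ℂ ↥(Λ ⊓ coordSub n (finIdx n U)) + (conflicts U).card ≤
      Module.finrank ℂ ↥(Λ ⊓ coordSub n (finIdx n (reduced U))) := by
  have h1 := finrank_union_add_card_add_le hiso U
  have h2 := finrank_add_inf_coordSpan_le hiso (reduced U)
  omega

/-- `d(A) + d(B) ≤ d(A ∩ B) + d(A ∪ B)`. -/
lemma finrank_submod {n : ℕ} (Λ : Submodule ℂ (Idx n → ℂ)) (A B : Finset (Fin n × Bool)) :
    Module.finrank ℂ ↥(Λ ⊓ coordSub n (finIdx n A)) +
        Module.finrank ℂ ↥(Λ ⊓ coordSub n (finIdx n B)) ≤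
      Module.finrank ℂ ↥(Λ ⊓ coordSub n (finIdx n (A ∩ B))) +
        Module.finrank ℂ ↥(Λ ⊓ coordSub n (finIdx n (A ∪ B))) := by
  rw [← Submodule.finrank_sup_add_finrank_inf_eq]
  refine add_le_add (Submodule.finrank_mono (sup_le ?_ ?_)) (Submodule.finrank_mono ?_)
  · exact fun v hv => ⟨hv.1, mem_coordSub.2 fun p hp =>
      mem_coordSub.1 hv.2 p (Finset.mem_inter.1 hp).1⟩
  · exact fun v hv => ⟨hv.1, mem_coordSub.2 fun p hp =>
      mem_coordSub.1 hv.2 p (Finset.mem_inter.1 hp).2⟩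
  · rintro v ⟨⟨hv, hA⟩, -, hB⟩
    refine ⟨hv, mem_coordSub.2 fun p hp => ?_⟩
    rcases Finset.mem_union.1 hp with h | h
    · exact mem_coordSub.1 hA p h
    · exact mem_coordSub.1 hB p h

/-! ### Counting barred elements -/

/-- Each conflicting pair in `U` accounts for exactly one barred element of `U` outside
`reduced U`. -/
lemma card_barred {n : ℕ} (U : Finset (Fin n × Bool)) :
    (U.filter fun p => p.2 = true).card =
      ((reduced U).filter fun p => p.2 = true).card + (conflicts U).card := by
  rw [← Finset.card_image_of_injective (conflicts U) barP_injective,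
    ← Finset.card_union_of_disjoint]
  · congr 1
    ext p
    rw [Finset.mem_union, mem_image_barP, mem_conflicts, barP_barP]
    simp only [Finset.mem_filter, mem_reduced]
    have h3 : (barP p).2 = !p.2 := rfl
    rw [h3]
    cases hb : p.2 <;> simp
    tauto
  · rw [Finset.disjoint_left]
    intro p hp hp'
    rw [mem_image_barP, mem_conflicts] at hp'
    exact (mem_reduced.1 (Finset.mem_filter.1 hp).1).2 hp'.1

theorem stmt5 (n : ℕ) (hn : 2 ≤ n)
    (Λ : Submodule ℂ (Idx n → ℂ)) (hiso : IsIsotropic n Λ)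
    (hΛ : Module.finrank ℂ ↥Λ = n)
    (S₁ S₂ : Finset (Fin n × Bool)) (h₁ : Admissible n S₁) (h₂ : Admissible n S₂) :
    gF n Λ (S₁ ∩ S₂) + gF n Λ (sqcup n S₁ S₂) ≤ gF n Λ S₁ + gF n Λ S₂ := by
  have hJ : sqcup n S₁ S₂ = reduced (S₁ ∪ S₂) := rfl
  have h1 := finrank_submod Λ S₁ S₂
  have h2 := finrank_union_add_card_le hiso hΛ (S₁ ∪ S₂)
  have h3 := card_barred (S₁ ∪ S₂)
  have h4 := Finset.card_union_add_card_inter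
    (S₁.filter fun p => p.2 = true) (S₂.filter fun p => p.2 = true)
  rw [← Finset.filter_union, ← Finset.filter_inter_distrib] at h4
  -- The subtraction in `rk` does not truncate, since `Λ ∩ H_S ⊆ Λ` has dimension at most `n`.
  have hd : ∀ S : Finset (Fin n × Bool),
      Module.finrank ℂ ↥(Λ ⊓ coordSub n (finIdx n S)) ≤ n := fun S =>
    (Submodule.finrank_mono inf_le_left).trans hΛ.le
  have hd1 := hd S₁
  have hd2 := hd S₂
  have hd3 := hd (S₁ ∩ S₂)
  have hd4 := hd (reduced (S₁ ∪ S₂))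
  rw [hJ]
  unfold gF rkF rk
  omega
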